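/- Let f₂ ∈ F_(C,β) and ξ > 0, and let ε ∈ (0,1) satisfy ε ≤ ξ/12, ε·‖∂f₂/∂x‖_{C⁰} ≤ ξ/12, ε(1+C) ≤ ξ/12, and ε ≤ (ξ/(24C^β))^{1/(β−α)}. Define f₃(x,y) = (1−ε)f₂(x,y) + εy and C_ε = max{C(1−ε)+ε, C/(1−ε+Cε)}. Then C_ε < C, f₃ ∈ F_(C_ε,β), and d_α(f₃, f₂) < ξ/3. -/

import Mathlib

open MeasureTheory Set Filter Topology
open scoped ENNReal

noncomputable section

/-- The unit square `M = [0,1]²`. -/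
def MSq : Set (ℝ × ℝ) := unitInterval ×ˢ unitInterval

/-- Lower `(C,γ)`-bi-Hölder bound in the second variable. -/
def BiHolderLower (C γ : ℝ) (f : ℝ → ℝ → ℝ) : Prop :=
  ∀ x ∈ unitInterval, ∀ y₁ ∈ unitInterval, ∀ y₂ ∈ unitInterval, y₁ ≠ y₂ →
    C⁻¹ * |y₂ - y₁| ^ (1 / γ) ≤ |f x y₂ - f x y₁|

/-- Upper `(C,γ)`-Hölder bound in the second variable. -/
def BiHolderUpper (C γ : ℝ) (f : ℝ → ℝ → ℝ) : Prop :=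
  ∀ x ∈ unitInterval, ∀ y₁ ∈ unitInterval, ∀ y₂ ∈ unitInterval, y₁ ≠ y₂ →
    |f x y₂ - f x y₁| ≤ C * |y₂ - y₁| ^ γ

/-- Membership in the space `F_(C,γ)`: conditions (i)–(iv); `fx` plays the role of `∂f/∂x`. -/
structure IsFol (C γ : ℝ) (f fx : ℝ → ℝ → ℝ) : Prop where
  mapsTo : ∀ x ∈ unitInterval, ∀ y ∈ unitInterval, f x y ∈ unitInterval
  hasDeriv : ∀ y ∈ unitInterval, ∀ x ∈ unitInterval,
    HasDerivWithinAt (fun x' => f x' y) (fx x y) unitInterval x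
  derivCont : ContinuousOn (fun p : ℝ × ℝ => fx p.1 p.2) MSq
  eq_id : ∀ y ∈ unitInterval, f 0 y = y
  eq_bot : ∀ x ∈ unitInterval, f x 0 = 0
  eq_top : ∀ x ∈ unitInterval, f x 1 = 1
  lower : BiHolderLower C γ f
  upper : BiHolderUpper C γ f

/-- The space `F_(C,γ)`. -/
structure Fol (C γ : ℝ) where
  f : ℝ → ℝ → ℝ
  fx : ℝ → ℝ → ℝ
  isFol : IsFol C γ f fx

/-- The inverse of `y ↦ f x y` on `[0,1]`, i.e. the holonomy `h^f_{x,0}`. -/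
def hinv (f : ℝ → ℝ → ℝ) (x : ℝ) : ℝ → ℝ := Function.invFunOn (f x) unitInterval

/-- The `C⁰` distance over the square. -/
def C0dist (u v : ℝ → ℝ → ℝ) : ℝ :=
  sSup {r | ∃ x ∈ unitInterval, ∃ y ∈ unitInterval, r = |u x y - v x y|}

/-- The `α`-Hölder seminorm of the difference `h - k` on `[0,1]`. -/
def holDist (α : ℝ) (h k : ℝ → ℝ) : ℝ :=
  sSup {r | ∃ y₁ ∈ unitInterval, ∃ y₂ ∈ unitInterval, y₁ ≠ y₂ ∧
    r = |(h y₂ - k y₂) - (h y₁ - k y₁)| / |y₂ - y₁| ^ α}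

/-- The distance `d_α`, on raw data `(f, ∂f/∂x)`, `(g, ∂g/∂x)`. -/
def dalpha (α : ℝ) (f fx g gx : ℝ → ℝ → ℝ) : ℝ :=
  C0dist f g + C0dist fx gx +
    sSup {r | ∃ x ∈ unitInterval,
      r = max (holDist α (f x) (g x)) (holDist α (hinv f x) (hinv g x))}

/-- The distance `d_α` on `F_(C,γ)`. -/
def dalphaF {C γ : ℝ} (α : ℝ) (F G : Fol C γ) : ℝ := dalpha α F.f F.fx G.f G.fx

/-- Openness with respect to a distance function. -/
def IsOpenWrt {X : Type*} (d : X → X → ℝ) (s : Set X) : Prop :=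
  ∀ f ∈ s, ∃ ε > 0, ∀ g, d g f < ε → g ∈ s

/-- Density with respect to a distance function. -/
def IsDenseWrt {X : Type*} (d : X → X → ℝ) (s : Set X) : Prop :=
  ∀ f : X, ∀ ε > 0, ∃ g ∈ s, d g f < ε

/-- Lebesgue measure `μ` on the unit square `M`. -/
def muM : Measure (ℝ × ℝ) := volume.restrict MSq

/-- The projection `π_f(x,z) = f(x,·)⁻¹(z)` along the leaves. -/
def projF (f : ℝ → ℝ → ℝ) : ℝ × ℝ → ℝ := fun p => hinv f p.1 p.2

/-- The quotient measure `μ̂ = (π_f)_* μ`. -/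
def quotM {C γ : ℝ} (F : Fol C γ) : Measure ℝ := muM.map (projF F.f)

/-- The leaf `L_y = {(x, f(x,y)) : x ∈ [0,1]}`. -/
def Leaf {C γ : ℝ} (F : Fol C γ) (y : ℝ) : Set (ℝ × ℝ) :=
  (fun x => (x, F.f x y)) '' unitInterval

/-- `(ν_y)` is a Rokhlin disintegration of Lebesgue measure on the square w.r.t. `π_f`. -/
def IsDisint {C γ : ℝ} (F : Fol C γ) (ν : ℝ → Measure (ℝ × ℝ)) : Prop :=
  (∀ y, IsProbabilityMeasure (ν y)) ∧
  (∀ E : Set (ℝ × ℝ), MeasurableSet E → Measurable fun y => ν y E) ∧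
  (∀ᵐ y ∂quotM F, ν y (Leaf F y) = 1) ∧
  (∀ E : Set (ℝ × ℝ), MeasurableSet E → muM E = ∫⁻ y, ν y E ∂quotM F)

/-- The element `P_i` of the partition `P_{f,n}`. -/
def Pelt (f : ℝ → ℝ → ℝ) (n i : ℕ) : Set (ℝ × ℝ) :=
  {p | p.1 ∈ unitInterval ∧ f p.1 ((i : ℝ) / 2 ^ n) ≤ p.2 ∧ p.2 < f p.1 (((i : ℝ) + 1) / 2 ^ n)}

/-- `Ĩ = [b₁,b₂] × [0,1]`. -/
def Itilde (b₁ b₂ : ℝ) : Set (ℝ × ℝ) := Icc b₁ b₂ ×ˢ unitInterval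

/-- The set `A_{n,m,I}`. -/
def Aset (C γ : ℝ) (n m : ℕ) (b₁ b₂ : ℝ) : Set (Fol C γ) :=
  {F | ∀ i < 2 ^ n,
    muM (Pelt F.f n i ∩ Itilde b₁ b₂) / muM (Pelt F.f n i) < 1 / (m : ℝ≥0∞) ∨
    1 - 1 / (m : ℝ≥0∞) < muM (Pelt F.f n i ∩ Itilde b₁ b₂) / muM (Pelt F.f n i)}

/-- The set `B_{m,I}`. -/
def Bset (C γ : ℝ) (m : ℕ) (b₁ b₂ : ℝ) : Set (Fol C γ) := ⋃ n : ℕ, Aset C γ n m b₁ b₂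

/-- The leaf measure `λ_y`: pushforward of 1-dimensional Lebesgue measure on `[0,1]`
under `x ↦ (x, f(x,y))`. -/
def leafMeas {C γ : ℝ} (F : Fol C γ) (y : ℝ) : Measure (ℝ × ℝ) :=
  (volume.restrict unitInterval).map fun x => (x, F.f x y)

/-!
Along a leafwise convex combination of two foliations `f` and `g` the bi-Hölder constants
interpolate linearly: for the upper bound this is the triangle inequality, and for the lower one
both `y`-maps increase, so the increments add up without cancellation and the inverse constants
interpolate, after which convexity of `C ↦ C⁻¹` applies. Since the identity foliation has
constant `1`, moving towards it lowers the constant. The two entries of the maximum defining `C_ε`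
are the weighted arithmetic and harmonic means of `C` and `1`, so the first one is the larger.

For the distance, the delicate term is the Hölder seminorm of the difference of the inverses. It is
estimated by interpolation: both inverses are `β`-Hölder, and they are `ε^β`-close up to a constant
because `f` and the combination are `ε`-close, so an increment of the difference over `|y₂ - y₁|`
is at most a constant times `(min ε |y₂ - y₁|)^β ≤ ε^(β - α) |y₂ - y₁|^α`.
-/

lemma min_rpow_le_rpow_sub_mul_rpow {α β s t : ℝ} (hα : 0 ≤ α) (hαβ : α ≤ β) (hs : 0 < s)
    (ht : 0 < t) : min s t ^ β ≤ s ^ (β - α) * t ^ α := by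
  have hmin : 0 < min s t := lt_min hs ht
  calc min s t ^ β = min s t ^ (β - α) * min s t ^ α := by
        rw [← Real.rpow_add hmin, sub_add_cancel]
    _ ≤ s ^ (β - α) * t ^ α := by
        gcongr
        exacts [min_le_left s t, min_le_right s t]

lemma inv_convexCombo_le {C D t : ℝ} (hC : 0 < C) (hD : 0 < D) (ht : t ∈ unitInterval) :
    (C * (1 - t) + D * t)⁻¹ ≤ (1 - t) * C⁻¹ + t * D⁻¹ := by
  have hconvex := (convexOn_zpow (𝕜 := ℝ) (-1)).2 (mem_Ioi.2 hC) (mem_Ioi.2 hD)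
    (sub_nonneg.2 ht.2) ht.1 (sub_add_cancel 1 t)
  simpa only [zpow_neg_one, smul_eq_mul, mul_comm C, mul_comm D] using hconvex

lemma div_le_convexCombo_one {C t : ℝ} (hC : 0 < C) (ht : t ∈ unitInterval) :
    C / (1 - t + C * t) ≤ C * (1 - t) + t := by
  have hden : 0 < 1 - t + C * t := by
    simpa [mul_comm t] using (convex_Ioi (0 : ℝ)) (mem_Ioi.2 one_pos) (mem_Ioi.2 hC)
      (sub_nonneg.2 ht.2) ht.1 (sub_add_cancel 1 t)
  have hgap : 0 ≤ t * (1 - t) * (C - 1) ^ 2 :=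
    mul_nonneg (mul_nonneg ht.1 (sub_nonneg.2 ht.2)) (sq_nonneg _)
  rw [div_le_iff₀ hden]
  linear_combination hgap

section Distances

variable {u v : ℝ → ℝ → ℝ} {δ : ℝ}

lemma C0dist_le (hδ : 0 ≤ δ)
    (h : ∀ x ∈ unitInterval, ∀ y ∈ unitInterval, |u x y - v x y| ≤ δ) : C0dist u v ≤ δ := by
  refine Real.sSup_le ?_ hδ
  rintro _ ⟨x, hx, y, hy, rfl⟩
  exact h x hx y hy

lemma abs_sub_le_C0dist (hu : ContinuousOn (fun p : ℝ × ℝ => u p.1 p.2) MSq)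
    (hv : ContinuousOn (fun p : ℝ × ℝ => v p.1 p.2) MSq) {x y : ℝ} (hx : x ∈ unitInterval)
    (hy : y ∈ unitInterval) : |u x y - v x y| ≤ C0dist u v := by
  have hcompact : IsCompact MSq := isCompact_Icc.prod isCompact_Icc
  obtain ⟨B, hB⟩ := hcompact.exists_bound_of_continuousOn (hu.sub hv)
  refine le_csSup ⟨B, ?_⟩ ⟨x, hx, y, hy, rfl⟩
  rintro _ ⟨x', hx', y', hy', rfl⟩
  exact hB (x', y') ⟨hx', hy'⟩

lemma holDist_le {α K : ℝ} {h k : ℝ → ℝ} (hK : 0 ≤ K)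
    (hhk : ∀ a ∈ unitInterval, ∀ b ∈ unitInterval, a ≠ b →
      |(h b - k b) - (h a - k a)| ≤ K * |b - a| ^ α) : holDist α h k ≤ K := by
  refine Real.sSup_le ?_ hK
  rintro _ ⟨a, ha, b, hb, hab, rfl⟩
  exact (div_le_iff₀ (Real.rpow_pos_of_pos (abs_sub_pos.2 hab.symm) α)).2 (hhk a ha b hb hab)

lemma dalpha_le {α δ' K : ℝ} {ux vx : ℝ → ℝ → ℝ} (hK : 0 ≤ K) (h : C0dist u v ≤ δ)
    (hx : C0dist ux vx ≤ δ') (hhol : ∀ x ∈ unitInterval, holDist α (u x) (v x) ≤ K)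
    (hinvhol : ∀ x ∈ unitInterval, holDist α (hinv u x) (hinv v x) ≤ K) :
    dalpha α u ux v vx ≤ δ + δ' + K := by
  refine add_le_add (add_le_add h hx) (Real.sSup_le ?_ hK)
  rintro _ ⟨x, hx, rfl⟩
  exact max_le (hhol x hx) (hinvhol x hx)

end Distances

namespace IsFol

variable {C D α γ : ℝ} {f fx g gx : ℝ → ℝ → ℝ} {x : ℝ}

lemma one_le_const (hf : IsFol C γ f fx) : 1 ≤ C := by
  have h := hf.upper 0 unitInterval.zero_mem 0 unitInterval.zero_mem 1 unitInterval.one_mem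
    zero_ne_one
  simpa [hf.eq_id 0 unitInterval.zero_mem, hf.eq_id 1 unitInterval.one_mem] using h

lemma const_pos (hf : IsFol C γ f fx) : 0 < C := one_pos.trans_le hf.one_le_const

lemma mono_const (hf : IsFol C γ f fx) (hCD : C ≤ D) : IsFol D γ f fx where
  __ := hf
  lower x hx a ha b hb hab := by
    have := hf.const_pos
    exact le_trans (by gcongr) (hf.lower x hx a ha b hb hab)
  upper x hx a ha b hb hab := (hf.upper x hx a ha b hb hab).trans (by gcongr)

lemma holderOnWith (hf : IsFol C γ f fx) (hγ : 0 < γ) (hx : x ∈ unitInterval) :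
    HolderOnWith C.toNNReal γ.toNNReal (f x) unitInterval := by
  intro a ha b hb
  rcases eq_or_ne b a with rfl | hba
  · simp
  · rw [Real.coe_toNNReal γ hγ.le, edist_dist, edist_dist,
      ENNReal.ofReal_rpow_of_nonneg dist_nonneg hγ.le, ← ENNReal.ofReal,
      ← ENNReal.ofReal_mul hf.const_pos.le]
    exact ENNReal.ofReal_le_ofReal (hf.upper x hx b hb a ha hba)

lemma continuousOn (hf : IsFol C γ f fx) (hγ : 0 < γ) (hx : x ∈ unitInterval) :
    ContinuousOn (f x) unitInterval :=
  (hf.holderOnWith hγ hx).continuousOn (Real.toNNReal_pos.2 hγ)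

lemma abs_sub_le_rpow (hf : IsFol C γ f fx) (hγ : 0 < γ) (hx : x ∈ unitInterval) {a b : ℝ}
    (ha : a ∈ unitInterval) (hb : b ∈ unitInterval) :
    |b - a| ≤ C ^ γ * |f x b - f x a| ^ γ := by
  rcases eq_or_ne a b with rfl | hab
  · simp [Real.zero_rpow hγ.ne']
  · have hlower : |b - a| ^ γ⁻¹ ≤ C * |f x b - f x a| := by
      rw [← inv_mul_le_iff₀ hf.const_pos, ← one_div γ]
      exact hf.lower x hx a ha b hb hab
    rw [← Real.mul_rpow hf.const_pos.le (abs_nonneg _)]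
    exact (Real.rpow_inv_le_iff_of_pos (abs_nonneg _)
      (mul_nonneg hf.const_pos.le (abs_nonneg _)) hγ).1 hlower

lemma injOn (hf : IsFol C γ f fx) (hγ : 0 < γ) (hx : x ∈ unitInterval) :
    InjOn (f x) unitInterval := by
  intro a ha b hb hab
  have hle := hf.abs_sub_le_rpow hγ hx ha hb
  rw [hab, sub_self, abs_zero, Real.zero_rpow hγ.ne', mul_zero, abs_nonpos_iff] at hle
  exact (sub_eq_zero.1 hle).symm

lemma strictMonoOn (hf : IsFol C γ f fx) (hγ : 0 < γ) (hx : x ∈ unitInterval) :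
    StrictMonoOn (f x) unitInterval := by
  refine ContinuousOn.strictMonoOn_of_injOn_Icc zero_le_one ?_ (hf.continuousOn hγ hx)
    (hf.injOn hγ hx)
  rw [hf.eq_bot x hx, hf.eq_top x hx]
  exact zero_le_one

lemma surjOn (hf : IsFol C γ f fx) (hγ : 0 < γ) (hx : x ∈ unitInterval) :
    SurjOn (f x) unitInterval unitInterval := by
  have h := intermediate_value_Icc zero_le_one (hf.continuousOn hγ hx)
  rwa [hf.eq_bot x hx, hf.eq_top x hx] at h

lemma hinv_mem (hf : IsFol C γ f fx) (hγ : 0 < γ) (hx : x ∈ unitInterval) {z : ℝ}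
    (hz : z ∈ unitInterval) : hinv f x z ∈ unitInterval :=
  Function.invFunOn_mem (hf.surjOn hγ hx hz)

lemma apply_hinv (hf : IsFol C γ f fx) (hγ : 0 < γ) (hx : x ∈ unitInterval) {z : ℝ}
    (hz : z ∈ unitInterval) : f x (hinv f x z) = z :=
  Function.invFunOn_eq (hf.surjOn hγ hx hz)

lemma abs_hinv_sub_hinv_le (hf : IsFol C γ f fx) (hγ : 0 < γ) (hx : x ∈ unitInterval) {a b : ℝ}
    (ha : a ∈ unitInterval) (hb : b ∈ unitInterval) :
    |hinv f x b - hinv f x a| ≤ C ^ γ * |b - a| ^ γ := by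
  have h := hf.abs_sub_le_rpow hγ hx (hf.hinv_mem hγ hx ha) (hf.hinv_mem hγ hx hb)
  rwa [hf.apply_hinv hγ hx ha, hf.apply_hinv hγ hx hb] at h

lemma abs_hinv_sub_hinv_le_of_abs_sub_le (hf : IsFol C γ f fx) (hg : IsFol D γ g gx) (hγ : 0 < γ)
    (hx : x ∈ unitInterval) {δ z : ℝ} (hfg : ∀ y ∈ unitInterval, |f x y - g x y| ≤ δ)
    (hz : z ∈ unitInterval) : |hinv f x z - hinv g x z| ≤ D ^ γ * δ ^ γ := by
  have hmem := hf.hinv_mem hγ hx hz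
  have hclose : |g x (hinv f x z) - z| ≤ δ := by
    simpa only [hf.apply_hinv hγ hx hz, abs_sub_comm z] using hfg _ hmem
  have h := hg.abs_sub_le_rpow hγ hx (hg.hinv_mem hγ hx hz) hmem
  rw [hg.apply_hinv hγ hx hz] at h
  have := hg.const_pos
  exact h.trans (by gcongr)

lemma holDist_hinv_le (hf : IsFol C γ f fx) (hg : IsFol C γ g gx) (hγ : 0 < γ) (hα : 0 ≤ α)
    (hαγ : α ≤ γ) (hx : x ∈ unitInterval) {δ : ℝ} (hδ : 0 < δ)
    (hfg : ∀ y ∈ unitInterval, |f x y - g x y| ≤ δ) :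
    holDist α (hinv f x) (hinv g x) ≤ 2 * C ^ γ * δ ^ (γ - α) := by
  have hC := hf.const_pos
  refine holDist_le (by positivity) fun a ha b hb hab => ?_
  have hpos : 0 < |b - a| := abs_sub_pos.2 hab.symm
  have hbound : |(hinv f x b - hinv g x b) - (hinv f x a - hinv g x a)| ≤
      2 * C ^ γ * min δ |b - a| ^ γ := by
    rcases min_choice δ |b - a| with hmin | hmin <;> rw [hmin]
    · linarith [abs_sub (hinv f x b - hinv g x b) (hinv f x a - hinv g x a),
        hf.abs_hinv_sub_hinv_le_of_abs_sub_le hg hγ hx hfg ha,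
        hf.abs_hinv_sub_hinv_le_of_abs_sub_le hg hγ hx hfg hb]
    · rw [sub_sub_sub_comm]
      linarith [abs_sub (hinv f x b - hinv f x a) (hinv g x b - hinv g x a),
        hf.abs_hinv_sub_hinv_le hγ hx ha hb, hg.abs_hinv_sub_hinv_le hγ hx ha hb]
  calc |(hinv f x b - hinv g x b) - (hinv f x a - hinv g x a)|
      ≤ 2 * C ^ γ * min δ |b - a| ^ γ := hbound
    _ ≤ 2 * C ^ γ * (δ ^ (γ - α) * |b - a| ^ α) := by
        gcongr
        exact min_rpow_le_rpow_sub_mul_rpow hα hαγ hδ hpos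
    _ = 2 * C ^ γ * δ ^ (γ - α) * |b - a| ^ α := (mul_assoc _ _ _).symm

end IsFol

/-- The foliation of the unit square by horizontal leaves, `f(x,y) = y`. -/
def idFol {γ : ℝ} (hγ : 0 < γ) (hγ1 : γ ≤ 1) : Fol 1 γ where
  f _ y := y
  fx _ _ := 0
  isFol :=
    { mapsTo := fun _ _ _ hy => hy
      hasDeriv := fun _ _ _ _ => hasDerivWithinAt_const _ _ _
      derivCont := continuousOn_const
      eq_id := fun _ _ => rfl
      eq_bot := fun _ _ => rfl
      eq_top := fun _ _ => rfl
      lower := fun _ _ a ha b hb _ => by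
        rw [inv_one, one_mul]
        exact Real.rpow_le_self_of_le_one (abs_nonneg _) (Real.dist_le_of_mem_Icc_01 hb ha)
          (one_le_one_div hγ hγ1)
      upper := fun _ _ a ha b hb _ => by
        rw [one_mul]
        exact Real.self_le_rpow_of_le_one (abs_nonneg _) (Real.dist_le_of_mem_Icc_01 hb ha) hγ1 }

/-- The pointwise convex combination `(1 - t) u + t v` of two functions on the square. Applied both
to foliations and to their `x`-derivatives, it moves the first foliation towards the second. -/
def interp (t : ℝ) (u v : ℝ → ℝ → ℝ) : ℝ → ℝ → ℝ := fun x y => (1 - t) * u x y + t * v x y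

lemma interp_sub_left (t : ℝ) (u v : ℝ → ℝ → ℝ) (x y : ℝ) :
    interp t u v x y - u x y = t * (v x y - u x y) := by
  unfold interp
  ring

lemma interp_sub_interp (t : ℝ) (u v : ℝ → ℝ → ℝ) (x a b : ℝ) :
    interp t u v x b - interp t u v x a =
      (1 - t) * (u x b - u x a) + t * (v x b - v x a) := by
  unfold interp
  ring

lemma C0dist_interp_left_le {u v : ℝ → ℝ → ℝ} {t : ℝ} (ht : 0 ≤ t)
    (hu : ContinuousOn (fun p : ℝ × ℝ => u p.1 p.2) MSq)
    (hv : ContinuousOn (fun p : ℝ × ℝ => v p.1 p.2) MSq) :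
    C0dist (interp t u v) u ≤ t * C0dist v u := by
  have hbound : ∀ x ∈ unitInterval, ∀ y ∈ unitInterval,
      |interp t u v x y - u x y| ≤ t * C0dist v u := fun x hx y hy => by
    rw [interp_sub_left, abs_mul, abs_of_nonneg ht]
    exact mul_le_mul_of_nonneg_left (abs_sub_le_C0dist hv hu hx hy) ht
  have hzero := unitInterval.zero_mem
  exact C0dist_le ((abs_nonneg _).trans (hbound 0 hzero 0 hzero)) hbound

lemma abs_interp_sub_interp_of_monotoneOn {u v : ℝ → ℝ → ℝ} {s : Set ℝ} {t x a b : ℝ}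
    (hu : MonotoneOn (u x) s) (hv : MonotoneOn (v x) s) (ht : t ∈ unitInterval) (ha : a ∈ s)
    (hb : b ∈ s) :
    |interp t u v x b - interp t u v x a| =
      (1 - t) * |u x b - u x a| + t * |v x b - v x a| := by
  have ht0 : 0 ≤ t := ht.1
  have ht1 : 0 ≤ 1 - t := sub_nonneg.2 ht.2
  wlog hab : a ≤ b generalizing a b
  · simpa only [abs_sub_comm] using this hb ha (le_of_not_ge hab)
  have huab : 0 ≤ u x b - u x a := sub_nonneg.2 (hu ha hb hab)
  have hvab : 0 ≤ v x b - v x a := sub_nonneg.2 (hv ha hb hab)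
  rw [interp_sub_interp, abs_of_nonneg huab, abs_of_nonneg hvab, abs_of_nonneg (by positivity)]

lemma BiHolderUpper.interp {C D γ t : ℝ} {f g : ℝ → ℝ → ℝ} (hf : BiHolderUpper C γ f)
    (hg : BiHolderUpper D γ g) (ht : t ∈ unitInterval) :
    BiHolderUpper (C * (1 - t) + D * t) γ (interp t f g) := by
  intro x hx a ha b hb hab
  have ht0 : 0 ≤ t := ht.1
  have ht1 : 0 ≤ 1 - t := sub_nonneg.2 ht.2
  rw [interp_sub_interp]
  calc |(1 - t) * (f x b - f x a) + t * (g x b - g x a)|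
      ≤ |(1 - t) * (f x b - f x a)| + |t * (g x b - g x a)| := abs_add_le _ _
    _ = (1 - t) * |f x b - f x a| + t * |g x b - g x a| := by
        rw [abs_mul, abs_mul, abs_of_nonneg ht1, abs_of_nonneg ht0]
    _ ≤ (1 - t) * (C * |b - a| ^ γ) + t * (D * |b - a| ^ γ) := by
        gcongr
        exacts [hf x hx a ha b hb hab, hg x hx a ha b hb hab]
    _ = (C * (1 - t) + D * t) * |b - a| ^ γ := by ring

namespace IsFol

variable {C D α γ t : ℝ} {f fx g gx : ℝ → ℝ → ℝ}

lemma biHolderLower_interp (hf : IsFol C γ f fx) (hg : IsFol D γ g gx) (hγ : 0 < γ)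
    (ht : t ∈ unitInterval) : BiHolderLower (C * (1 - t) + D * t) γ (interp t f g) := by
  intro x hx a ha b hb hab
  have ht0 : 0 ≤ t := ht.1
  have ht1 : 0 ≤ 1 - t := sub_nonneg.2 ht.2
  calc (C * (1 - t) + D * t)⁻¹ * |b - a| ^ (1 / γ)
      ≤ ((1 - t) * C⁻¹ + t * D⁻¹) * |b - a| ^ (1 / γ) := by
        gcongr
        exact inv_convexCombo_le hf.const_pos hg.const_pos ht
    _ = (1 - t) * (C⁻¹ * |b - a| ^ (1 / γ)) + t * (D⁻¹ * |b - a| ^ (1 / γ)) := by ring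
    _ ≤ (1 - t) * |f x b - f x a| + t * |g x b - g x a| := by
        gcongr
        exacts [hf.lower x hx a ha b hb hab, hg.lower x hx a ha b hb hab]
    _ = |interp t f g x b - interp t f g x a| :=
        (abs_interp_sub_interp_of_monotoneOn (hf.strictMonoOn hγ hx).monotoneOn
          (hg.strictMonoOn hγ hx).monotoneOn ht ha hb).symm

protected lemma interp (hf : IsFol C γ f fx) (hg : IsFol D γ g gx) (hγ : 0 < γ)
    (ht : t ∈ unitInterval) :
    IsFol (C * (1 - t) + D * t) γ (interp t f g) (interp t fx gx) where
  mapsTo x hx y hy := (convex_Icc 0 1) (hf.mapsTo x hx y hy) (hg.mapsTo x hx y hy)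
    (sub_nonneg.2 ht.2) ht.1 (sub_add_cancel 1 t)
  hasDeriv y hy x hx :=
    ((hf.hasDeriv y hy x hx).const_mul (1 - t)).add ((hg.hasDeriv y hy x hx).const_mul t)
  derivCont := (continuousOn_const.mul hf.derivCont).add (continuousOn_const.mul hg.derivCont)
  eq_id y hy := by simp only [interp, hf.eq_id y hy, hg.eq_id y hy]; ring
  eq_bot x hx := by simp only [interp, hf.eq_bot x hx, hg.eq_bot x hx]; ring
  eq_top x hx := by simp only [interp, hf.eq_top x hx, hg.eq_top x hx]; ring
  lower := hf.biHolderLower_interp hg hγ ht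
  upper := hf.upper.interp hg.upper ht

lemma abs_interp_sub_left_le (hf : IsFol C γ f fx) (hg : IsFol D γ g gx) (ht : 0 ≤ t) {x y : ℝ}
    (hx : x ∈ unitInterval) (hy : y ∈ unitInterval) : |interp t f g x y - f x y| ≤ t := by
  rw [interp_sub_left, abs_mul, abs_of_nonneg ht]
  exact mul_le_of_le_one_right ht
    (Real.dist_le_of_mem_Icc_01 (hg.mapsTo x hx y hy) (hf.mapsTo x hx y hy))

lemma holDist_interp_left_le (hf : IsFol C γ f fx) (hg : IsFol D γ g gx) (hαγ : α ≤ γ)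
    (ht : 0 ≤ t) {x : ℝ} (hx : x ∈ unitInterval) :
    holDist α (interp t f g x) (f x) ≤ t * (D + C) := by
  have hC := hf.const_pos
  have hD := hg.const_pos
  refine holDist_le (by positivity) fun a ha b hb hab => ?_
  have hpow : |b - a| ^ γ ≤ |b - a| ^ α := Real.rpow_le_rpow_of_exponent_ge
    (abs_sub_pos.2 hab.symm) (Real.dist_le_of_mem_Icc_01 hb ha) hαγ
  rw [interp_sub_left, interp_sub_left, ← mul_sub, sub_sub_sub_comm, abs_mul, abs_of_nonneg ht,
    mul_assoc]
  gcongr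
  calc |(g x b - g x a) - (f x b - f x a)| ≤ |g x b - g x a| + |f x b - f x a| := abs_sub _ _
    _ ≤ D * |b - a| ^ γ + C * |b - a| ^ γ :=
        add_le_add (hg.upper x hx a ha b hb hab) (hf.upper x hx a ha b hb hab)
    _ = (D + C) * |b - a| ^ γ := (add_mul _ _ _).symm
    _ ≤ (D + C) * |b - a| ^ α := by gcongr

lemma dalpha_interp_left_le (hf : IsFol C γ f fx) (hg : IsFol D γ g gx) (hDC : D ≤ C)
    (hγ : 0 < γ) (hα : 0 ≤ α) (hαγ : α ≤ γ) (ht0 : 0 < t) (ht1 : t ≤ 1) :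
    dalpha α (interp t f g) (interp t fx gx) f fx ≤
      t + t * C0dist gx fx + max (t * (D + C)) (2 * C ^ γ * t ^ (γ - α)) := by
  have hC := hf.const_pos
  have hclose : ∀ x ∈ unitInterval, ∀ y ∈ unitInterval, |interp t f g x y - f x y| ≤ t :=
    fun x hx y hy => hf.abs_interp_sub_left_le hg ht0.le hx hy
  have hinterp : IsFol C γ (interp t f g) (interp t fx gx) :=
    (hf.interp hg hγ ⟨ht0.le, ht1⟩).mono_const (by nlinarith)
  refine dalpha_le (le_max_of_le_right (by positivity)) (C0dist_le ht0.le hclose)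
    (C0dist_interp_left_le ht0.le hf.derivCont hg.derivCont) (fun x hx => ?_) fun x hx => ?_
  · exact (hf.holDist_interp_left_le hg hαγ ht0.le hx).trans (le_max_left _ _)
  · exact (hinterp.holDist_hinv_le hf hγ hα hαγ hx ht0 (hclose x hx)).trans (le_max_right _ _)

end IsFol

theorem stmt13_general {C D β α : ℝ} (hDC : D < C) (hα : 0 ≤ α) (hαβ : α < β)
    (F : Fol C β) (G : Fol D β) {ξ ε : ℝ} (hε0 : 0 < ε) (hε1 : ε ≤ 1)
    (hderiv : ε * C0dist G.fx F.fx ≤ ξ / 12) (hconst : ε * (D + C) ≤ ξ / 12)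
    (hε : ε ≤ (ξ / (24 * C ^ β)) ^ (1 / (β - α))) :
    C * (1 - ε) + D * ε < C ∧
    IsFol (C * (1 - ε) + D * ε) β (interp ε F.f G.f) (interp ε F.fx G.fx) ∧
    dalpha α (interp ε F.f G.f) (interp ε F.fx G.fx) F.f F.fx < ξ / 3 := by
  have hC : 1 ≤ C := F.isFol.one_le_const
  have hD : 1 ≤ D := G.isFol.one_le_const
  have hεξ : ε ≤ ξ / 12 := (le_mul_of_one_le_right hε0.le (by linarith)).trans hconst
  have hξ : 0 < ξ := by linarith
  have hpow : 2 * C ^ β * ε ^ (β - α) ≤ ξ / 12 := by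
    rw [one_div, Real.le_rpow_inv_iff_of_pos hε0.le (by positivity) (sub_pos.2 hαβ),
      le_div_iff₀ (by positivity)] at hε
    linarith
  have hβ : 0 < β := hα.trans_lt hαβ
  refine ⟨by nlinarith, F.isFol.interp G.isFol hβ ⟨hε0.le, hε1⟩, ?_⟩
  have hdist := F.isFol.dalpha_interp_left_le G.isFol hDC.le hβ hα hαβ.le hε0 hε1
  linarith [max_le hconst hpow]

/-- If `f₂ ∈ F_(C,β)` and `ε ∈ (0,1)` satisfies `ε ≤ ξ/12`,
`ε‖∂f₂/∂x‖_{C⁰} ≤ ξ/12`, `ε(1+C) ≤ ξ/12` and `ε ≤ (ξ/(24C^β))^{1/(β−α)}`, then the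
interpolation `f₃(x,y) = (1−ε)f₂(x,y) + εy` satisfies `C_ε < C`, `f₃ ∈ F_(C_ε,β)` and
`d_α(f₃, f₂) < ξ/3`, where `C_ε = max{C(1−ε)+ε, C/(1−ε+Cε)}`. -/
theorem stmt13 (C β α : ℝ) (hC : 1 < C) (hα : 0 ≤ α) (hαβ : α < β) (hβ : β < 1)
    (F₂ : Fol C β) (ξ ε : ℝ) (hξ : 0 < ξ) (hε0 : 0 < ε) (hε1 : ε < 1)
    (h1 : ε ≤ ξ / 12)
    (h2 : ε * sSup {s | ∃ x ∈ unitInterval, ∃ y ∈ unitInterval, s = |F₂.fx x y|} ≤ ξ / 12)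
    (h3 : ε * (1 + C) ≤ ξ / 12)
    (h4 : ε ≤ (ξ / (24 * C ^ β)) ^ (1 / (β - α))) :
    max (C * (1 - ε) + ε) (C / (1 - ε + C * ε)) < C ∧
    IsFol (max (C * (1 - ε) + ε) (C / (1 - ε + C * ε))) β
      (fun x y => (1 - ε) * F₂.f x y + ε * y) (fun x y => (1 - ε) * F₂.fx x y) ∧
    dalpha α (fun x y => (1 - ε) * F₂.f x y + ε * y) (fun x y => (1 - ε) * F₂.fx x y)
      F₂.f F₂.fx < ξ / 3 := by
  have hβ0 : 0 < β := hα.trans_lt hαβ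
  rw [max_eq_left (div_le_convexCombo_one (zero_lt_one.trans hC) ⟨hε0.le, hε1.le⟩)]
  simpa +unfoldPartialApp [interp, idFol] using stmt13_general hC hα hαβ F₂ (idFol hβ0 hβ.le)
    hε0 hε1.le (by simpa [C0dist, idFol] using h2) h3 h4

end
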